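/- In the group decision dinner, every SPE is conflict-free: for every SPE s, every turn t, every history h of length t−1, every morsel x ∉ h, and every player j ≠ P t, it is not the case that B_j(O_s(h)) <_j B_j(O_s(h ++ [x])). That is, no group can change its decision at a node so that any one member of the group receives a strictly more enjoyable plate. -/

import Mathlib

/-- The plate of player `i` under play sequence `a`, with turn order `P`. -/
def plate {M : Type*} [DecidableEq M] {m k : ℕ} (P : Fin m → Fin k) (a : Fin m → M)
    (i : Fin k) : Finset M :=
  (Finset.univ.filter fun t => P t = i).image a

/-- Pairwise comparison of plates with respect to a morsel ordering `le`. -/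
def PlateLE {M : Type*} (le : M → M → Prop) (A B : Finset M) : Prop :=
  ∃ f : A → B, Function.Bijective f ∧ ∀ x : A, le x.1 (f x).1

/-- Strict pairwise comparison of plates. -/
def PlateLT {M : Type*} (le : M → M → Prop) (A B : Finset M) : Prop :=
  PlateLE le A B ∧ A ≠ B

/-- The knight order of player `i` on play sequences. -/
def KnightLT {M : Type*} [DecidableEq M] {m k : ℕ} (P : Fin m → Fin k)
    (ord : Fin k → LinearOrder M) (i : Fin k) (a b : Fin m → M) : Prop :=
  ((∀ j, j ≠ i → PlateLE (ord j).le (plate P a j) (plate P b j)) ∧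
      ∃ j, j ≠ i ∧ PlateLT (ord j).le (plate P a j) (plate P b j)) ∨
    ((∀ j, j ≠ i → plate P a j = plate P b j) ∧
      PlateLT (ord i).le (plate P a i) (plate P b i))

/-- The lout order of player `i` on play sequences. -/
def LoutLT {M : Type*} {m k : ℕ} (P : Fin m → Fin k)
    (ord : Fin k → LinearOrder M) (i : Fin k) (a b : Fin m → M) : Prop :=
  ∃ t : Fin m, P t = i ∧ (∀ s : Fin m, s < t → a s = b s) ∧ (ord i).lt (a t) (b t)

/-- A strategy profile: assigns to each duplicate-free history of length `< m` a
morsel not occurring in it. -/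
structure Strategy (M : Type*) (m : ℕ) where
  choice : List M → M
  valid : ∀ h : List M, h.Nodup → h.length < m → choice h ∉ h

/-- Iteratively extend a history by the choices prescribed by `s`. -/
def Strategy.extend {M : Type*} {m : ℕ} (s : Strategy M m) : ℕ → List M → List M
  | 0, h => h
  | j + 1, h => Strategy.extend s j (h ++ [s.choice h])

/-- The contingent outcome of strategy profile `s` from history `h`, as a play
sequence. -/
def Strategy.play {M : Type*} {m : ℕ} (s : Strategy M m) (h : List M) : Fin m → M :=
  fun t => (s.extend (m - h.length) h).getD t.val (s.choice [])

/-- Subgame perfect equilibrium with respect to preferences `pref t` at turn `t`. -/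
def SPE {M : Type*} {m : ℕ}
    (pref : Fin m → (Fin m → M) → (Fin m → M) → Prop) (s : Strategy M m) : Prop :=
  ∀ t : Fin m, ∀ h : List M, h.Nodup → h.length = t.val →
    ∀ x : M, x ∉ h → ¬ pref t (s.play h) (s.play (h ++ [x]))

/-- Optimal plays: contingent outcomes of subgame perfect equilibria from the
empty history. -/
def OptimalPlay {M : Type*} {m : ℕ}
    (pref : Fin m → (Fin m → M) → (Fin m → M) → Prop) (a : Fin m → M) : Prop :=
  ∃ s : Strategy M m, SPE pref s ∧ a = s.play []

/-- The greedy play: at each turn `t` the mover `P t` selects her favourite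
remaining morsel. -/
def IsGreedy {M : Type*} {m k : ℕ} (P : Fin m → Fin k) (ord : Fin k → LinearOrder M)
    (a : Fin m → M) : Prop :=
  Function.Injective a ∧
    ∀ t : Fin m, ∀ x : M, (∀ s : Fin m, s < t → a s ≠ x) → x ≠ a t →
      (ord (P t)).lt x (a t)

/-- The group plate of player `i`: the morsels chosen on turns where `i` is NOT
the speaker. -/
def groupPlate {M : Type*} [DecidableEq M] {m k : ℕ} (P : Fin m → Fin k)
    (a : Fin m → M) (i : Fin k) : Finset M :=
  (Finset.univ.filter fun t => P t ≠ i).image a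

/-- The group Pareto order at turn `t`: every non-speaking player receives a
weakly more enjoyable group plate, and at least one receives a strictly more
enjoyable one. -/
def ParetoLT {M : Type*} [DecidableEq M] {m k : ℕ} (P : Fin m → Fin k)
    (ord : Fin k → LinearOrder M) (t : Fin m) (a b : Fin m → M) : Prop :=
  (∀ j, j ≠ P t → PlateLE (ord j).le (groupPlate P a j) (groupPlate P b j)) ∧
    ∃ j, j ≠ P t ∧ PlateLT (ord j).le (groupPlate P a j) (groupPlate P b j)

/-!
A speaker wants the morsels of her own turns, which she does not share, to be bad. Going backwards
from the last turn to the current one, let each turn receive the morsel its speaker likes least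
among those not yet assigned. If a morsel `y` is taken away before this procedure, no player
gains: she weakly prefers her share of all remaining morsels to `y` together with her share of the
others. If the current group takes the very morsel that the procedure assigns to the current turn,
all plates stay the same. So this choice is optimal for all members of the group simultaneously,
and backward induction forces every equilibrium to produce these plates, although not necessarily
this play.
-/

namespace PlateLE

variable {M : Type*} {r : M → M → Prop} {A B C D : Finset M}

protected theorem refl [Std.Refl r] (A : Finset M) : PlateLE r A A :=
  ⟨id, Function.bijective_id, fun x => refl_of r x.1⟩

protected theorem trans [IsTrans M r] (hAB : PlateLE r A B) (hBC : PlateLE r B C) :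
    PlateLE r A C := by
  obtain ⟨f, hf, hle_f⟩ := hAB
  obtain ⟨g, hg, hle_g⟩ := hBC
  exact ⟨g ∘ f, hg.comp hf, fun x => trans_of r (hle_f x) (hle_g (f x))⟩

protected theorem union [DecidableEq M] (hAB : PlateLE r A B) (hCD : PlateLE r C D)
    (hAC : Disjoint A C) (hBD : Disjoint B D) : PlateLE r (A ∪ C) (B ∪ D) := by
  obtain ⟨f, hf, hle_f⟩ := hAB
  obtain ⟨g, hg, hle_g⟩ := hCD
  let e := Equiv.Finset.union A C hAC
  let e' := Equiv.Finset.union B D hBD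
  refine ⟨e' ∘ Sum.map f g ∘ e.symm,
    e'.bijective.comp ((hf.sumMap hg).comp e.symm.bijective), fun x => ?_⟩
  obtain ⟨y | y, rfl⟩ := e.surjective x
  · simpa [e, e'] using hle_f y
  · simpa [e, e'] using hle_g y

protected theorem singleton {x y : M} (hxy : r x y) : PlateLE r {x} {y} :=
  ⟨fun _ => default, ⟨Function.injective_of_subsingleton _, Function.surjective_to_subsingleton _⟩,
    by simpa using hxy⟩

theorem insert_insert [DecidableEq M] {x y : M} (hxy : r x y) (hAB : PlateLE r A B) (hx : x ∉ A)
    (hy : y ∉ B) : PlateLE r (insert x A) (insert y B) := by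
  simpa only [Finset.insert_eq] using
    (PlateLE.singleton hxy).union hAB (Finset.disjoint_singleton_left.2 hx)
      (Finset.disjoint_singleton_left.2 hy)

end PlateLE

-- Iterating along a cycle of `f` gives `x ≤ f x ≤ ⋯ ≤ x`.
theorem eq_self_of_injective_of_id_le {α : Type*} [Finite α] [PartialOrder α] {f : α → α}
    (hf : Function.Injective f) (hle : id ≤ f) (x : α) : f x = x := by
  obtain ⟨n, hn, hx⟩ := hf.mem_periodicPts x
  obtain ⟨n, rfl⟩ := Nat.exists_eq_succ_of_ne_zero hn.ne'
  refine le_antisymm ?_ (hle x)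
  calc f x ≤ f^[n] (f x) := Function.id_le_iterate_of_id_le hle n (f x)
    _ = x := hx

protected theorem PlateLE.antisymm {M : Type*} [PartialOrder M] {A B : Finset M}
    (hAB : PlateLE (· ≤ ·) A B) (hBA : PlateLE (· ≤ ·) B A) : A = B := by
  obtain ⟨f, hf, hle_f⟩ := hAB
  obtain ⟨g, hg, hle_g⟩ := hBA
  have hgf : ∀ x, g (f x) = x :=
    eq_self_of_injective_of_id_le (hg.injective.comp hf.injective)
      fun x => (hle_f x).trans (hle_g (f x))
  have hf_eq : ∀ x hx, (f ⟨x, hx⟩).1 = x := fun x hx =>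
    le_antisymm ((hle_g _).trans_eq (congrArg Subtype.val (hgf ⟨x, hx⟩))) (hle_f ⟨x, hx⟩)
  have hsub : A ⊆ B := fun x hx => hf_eq x hx ▸ (f ⟨x, hx⟩).2
  exact Finset.eq_of_subset_of_card_le hsub (by simpa using (Fintype.card_of_bijective hf).ge)

theorem exists_least_mem {M : Type*} (o : LinearOrder M) {R : Finset M} (hR : R.Nonempty) :
    ∃ p ∈ R, ∀ q ∈ R, o.le p q :=
  R.exists_min_image id hR

section Serve

variable {M ι : Type*} [DecidableEq M] [DecidableEq ι] {i i' j : ι} {x y : M} {A B : Finset M}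

/-- The plate of player `j` after the morsel `x` has been shared by everyone except the
speaker `i`, where `A` is her plate before. -/
def serve (i j : ι) (x : M) (A : Finset M) : Finset M :=
  if i = j then A else insert x A

theorem serve_of_ne (hij : i ≠ j) : serve i j x A = insert x A :=
  if_neg hij

theorem serve_subset_insert : serve i j x A ⊆ insert x A := by
  unfold serve
  split_ifs
  exacts [Finset.subset_insert x A, subset_rfl]

theorem serve_left_comm : serve i j x (serve i' j y A) = serve i' j y (serve i j x A) := by
  unfold serve
  split_ifs
  exacts [rfl, rfl, rfl, Finset.insert_comm x y A]

theorem insert_serve : insert x (serve i j y A) = serve i j y (insert x A) := by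
  unfold serve
  split_ifs
  exacts [rfl, Finset.insert_comm x y A]

theorem serve_union : serve i j x A ∪ B = A ∪ serve i j x B := by
  unfold serve
  split_ifs
  exacts [rfl, (Finset.insert_union x A B).trans (Finset.union_insert x A B).symm]

theorem PlateLE.serve_serve {r : M → M → Prop} [Std.Refl r] (hAB : PlateLE r A B) (hA : x ∉ A)
    (hB : x ∉ B) : PlateLE r (serve i j x A) (serve i j x B) := by
  unfold serve
  split_ifs
  exacts [hAB, hAB.insert_insert (refl_of r x) hA hB]

theorem plateLE_insert_serve {ord : ι → LinearOrder M} (hxy : (ord i).le x y)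
    (hAB : PlateLE (ord j).le (insert y A) B) (hne : x ≠ y) (hxA : x ∉ A) (hyA : y ∉ A)
    (hxB : x ∉ B) : PlateLE (ord j).le (insert x (serve i j y A)) (serve i j x B) := by
  unfold serve
  split_ifs with hij
  · subst hij
    exact ((PlateLE.refl A).insert_insert hxy hxA hyA).trans hAB
  · exact hAB.insert_insert ((ord j).le_refl x) (by simp [hne, hxA]) hxB

end Serve

section ReverseGreedy

variable {M ι : Type*} [DecidableEq M] [DecidableEq ι] (ord : ι → LinearOrder M) {i j : ι}
  {L : List ι} {R : Finset M}

/-- The morsels of `R` that player `j` shares when each speaker in the list in turn is assigned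
her least preferred remaining morsel, which the other players share. The list runs through the
turns of the dinner backwards. Morsels left over at its end go to everyone; once the morsels run
out, the rest of the list is ignored. -/
noncomputable def reverseGreedy (j : ι) : List ι → Finset M → Finset M
  | [], R => R
  | i :: L, R =>
    if hR : R.Nonempty then
      let p := @Finset.min' M (ord i) R hR
      serve i j p (reverseGreedy j L (R.erase p))
    else ∅

theorem reverseGreedy_cons {p : M} (hp : p ∈ R) (hmin : ∀ q ∈ R, (ord i).le p q) :
    reverseGreedy ord j (i :: L) R = serve i j p (reverseGreedy ord j L (R.erase p)) := by
  have hR : R.Nonempty := ⟨p, hp⟩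
  have hp_eq : @Finset.min' M (ord i) R hR = p :=
    (ord i).le_antisymm _ _ (@Finset.min'_le M (ord i) R p hp)
      (hmin _ (@Finset.min'_mem M (ord i) R hR))
  simp only [reverseGreedy, dif_pos hR, hp_eq]

theorem reverseGreedy_empty : reverseGreedy ord j L ∅ = ∅ := by
  cases L <;> simp [reverseGreedy]

theorem reverseGreedy_subset : reverseGreedy ord j L R ⊆ R := by
  induction L generalizing R with
  | nil => exact subset_rfl
  | cons i L ih =>
    obtain rfl | hR := R.eq_empty_or_nonempty
    · exact (reverseGreedy_empty ord).subset
    obtain ⟨p, hp, hmin⟩ := exists_least_mem (ord i) hR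
    rw [reverseGreedy_cons ord hp hmin]
    exact serve_subset_insert.trans
      (Finset.insert_subset hp (ih.trans (Finset.erase_subset p R)))

theorem notMem_reverseGreedy {x : M} (hx : x ∉ R) : x ∉ reverseGreedy ord j L R :=
  fun h => hx (reverseGreedy_subset ord h)

theorem reverseGreedy_append_singleton_of_ne (hij : i ≠ j) :
    reverseGreedy ord j (L ++ [i]) R = reverseGreedy ord j L R := by
  induction L generalizing R with
  | nil =>
    obtain rfl | hR := R.eq_empty_or_nonempty
    · simp only [reverseGreedy_empty]
    obtain ⟨p, hp, hmin⟩ := exists_least_mem (ord i) hR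
    rw [List.nil_append, reverseGreedy_cons ord hp hmin, serve_of_ne hij]
    exact Finset.insert_erase hp
  | cons i' L ih =>
    obtain rfl | hR := R.eq_empty_or_nonempty
    · simp only [reverseGreedy_empty]
    obtain ⟨p, hp, hmin⟩ := exists_least_mem (ord i') hR
    rw [List.cons_append, reverseGreedy_cons ord hp hmin, reverseGreedy_cons ord hp hmin, ih]

theorem exists_reverseGreedy_append_singleton (i : ι) (hcard : L.length < R.card) :
    ∃ x ∈ R, ∀ j, reverseGreedy ord j (L ++ [i]) R =
      serve i j x (reverseGreedy ord j L (R.erase x)) := by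
  induction L generalizing R with
  | nil =>
    obtain ⟨x, hx, hmin⟩ := exists_least_mem (ord i) (Finset.card_pos.1 hcard.pos)
    exact ⟨x, hx, fun j => reverseGreedy_cons ord hx hmin⟩
  | cons i' L ih =>
    obtain ⟨p, hp, hmin⟩ := exists_least_mem (ord i') (Finset.card_pos.1 hcard.pos)
    obtain ⟨x, hx, hx_eq⟩ := ih (R := R.erase p) (by
      rw [Finset.card_erase_of_mem hp]
      exact Nat.lt_sub_of_add_lt hcard)
    obtain ⟨hxp, hxR⟩ := Finset.mem_erase.1 hx
    have hp' : p ∈ R.erase x := Finset.mem_erase.2 ⟨hxp.symm, hp⟩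
    refine ⟨x, hxR, fun j => ?_⟩
    rw [List.cons_append, reverseGreedy_cons ord hp hmin,
      reverseGreedy_cons ord hp' fun q hq => hmin q (Finset.mem_of_mem_erase hq), hx_eq j,
      serve_left_comm, Finset.erase_right_comm]

theorem plateLE_insert_reverseGreedy_erase {y : M} (hy : y ∈ R) (hcard : L.length < R.card) :
    PlateLE (ord j).le (insert y (reverseGreedy ord j L (R.erase y)))
      (reverseGreedy ord j L R) := by
  induction L generalizing R y with
  | nil => simpa only [reverseGreedy, Finset.insert_erase hy] using PlateLE.refl R
  | cons i L ih =>
    obtain ⟨p, hp, hmin⟩ := exists_least_mem (ord i) ⟨y, hy⟩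
    have hcard_erase : L.length < (R.erase p).card := by
      rw [Finset.card_erase_of_mem hp]
      exact Nat.lt_sub_of_add_lt hcard
    have hpL : p ∉ reverseGreedy ord j L (R.erase p) :=
      notMem_reverseGreedy ord (Finset.notMem_erase p R)
    rw [reverseGreedy_cons ord hp hmin]
    obtain rfl | hpy := eq_or_ne p y
    · -- Without `y = p`, the speaker `i` is assigned the next morsel `q` of her order.
      obtain ⟨q, hq, hqmin⟩ := exists_least_mem (ord i) (Finset.card_pos.1 hcard_erase.pos)
      obtain ⟨hqp, hqR⟩ := Finset.mem_erase.1 hq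
      rw [reverseGreedy_cons ord hq hqmin]
      exact plateLE_insert_serve (hmin q hqR) (ih hq hcard_erase) hqp.symm
        (notMem_reverseGreedy ord (by simp)) (notMem_reverseGreedy ord (by simp)) hpL
    · have hp' : p ∈ R.erase y := Finset.mem_erase.2 ⟨hpy, hp⟩
      have hy' : y ∈ R.erase p := Finset.mem_erase.2 ⟨hpy.symm, hy⟩
      rw [reverseGreedy_cons ord hp' fun q hq => hmin q (Finset.mem_of_mem_erase hq),
        insert_serve, Finset.erase_right_comm]
      refine (ih hy' hcard_erase).serve_serve (fun hmem => ?_) hpL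
      obtain rfl | hmem := Finset.mem_insert.1 hmem
      exacts [hpy rfl, notMem_reverseGreedy ord (by simp) hmem]

end ReverseGreedy

section Plays

variable {M : Type*} {m k : ℕ}

theorem nodup_append_singleton {h : List M} {x : M} (hnd : h.Nodup) (hx : x ∉ h) :
    (h ++ [x]).Nodup := by
  simpa only [List.concat_eq_append] using hnd.concat hx

namespace Strategy

variable (s : Strategy M m) {h : List M}

theorem length_extend (r : ℕ) (h : List M) : (s.extend r h).length = h.length + r := by
  induction r generalizing h with
  | zero => rfl
  | succ r ih => rw [extend, ih, List.length_append, List.length_singleton, add_assoc, add_comm 1]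

theorem nodup_extend {r : ℕ} (hnd : h.Nodup) (hlen : h.length + r ≤ m) :
    (s.extend r h).Nodup := by
  induction r generalizing h with
  | zero => exact hnd
  | succ r ih =>
    exact ih (nodup_append_singleton hnd (s.valid h hnd (by lia))) (by grind)

theorem play_injective (hnd : h.Nodup) (hlen : h.length ≤ m) :
    Function.Injective (s.play h) := by
  have hlen_ext : (s.extend (m - h.length) h).length = m := by
    rw [length_extend, Nat.add_sub_cancel' hlen]
  intro t u htu
  simp only [play] at htu
  rw [List.getD_eq_getElem _ _ (by lia), List.getD_eq_getElem _ _ (by lia)] at htu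
  exact Fin.ext ((s.nodup_extend hnd (by lia)).getElem_inj_iff.1 htu)

theorem play_append_choice (hlen : h.length < m) : s.play (h ++ [s.choice h]) = s.play h := by
  funext t
  simp only [play, List.length_append, List.length_singleton]
  rw [show m - h.length = m - (h.length + 1) + 1 by lia, extend]

theorem play_bijective [Fintype M] (hm : m = Fintype.card M) (hnd : h.Nodup)
    (hlen : h.length ≤ m) : Function.Bijective (s.play h) :=
  (Fintype.bijective_iff_injective_and_card _).2
    ⟨s.play_injective hnd hlen, by rw [Fintype.card_fin, hm]⟩

end Strategy

variable [DecidableEq M] {P : Fin m → Fin k}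

theorem mem_groupPlate_iff_exists_notMem {a : Fin m → M} (ha : Function.Bijective a) {i : Fin k}
    {x : M} : x ∈ groupPlate P a i ↔ ∃ j ≠ i, x ∉ groupPlate P a j := by
  obtain ⟨t, rfl⟩ := ha.surjective x
  simp [groupPlate, ha.injective.eq_iff]

theorem groupPlate_eq_of_forall_ne {a b : Fin m → M} (ha : Function.Bijective a)
    (hb : Function.Bijective b) {i : Fin k}
    (hab : ∀ j ≠ i, groupPlate P a j = groupPlate P b j) : groupPlate P a = groupPlate P b := by
  funext j
  obtain rfl | hj := eq_or_ne j i
  · ext x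
    rw [mem_groupPlate_iff_exists_notMem ha, mem_groupPlate_iff_exists_notMem hb]
    exact exists_congr fun l => and_congr_right fun hl => by rw [hab l hl]
  · exact hab j hj

theorem SPE.groupPlate_eq_of_forall_plateLE [Fintype M] {ord : Fin k → LinearOrder M}
    {s : Strategy M m} (hs : SPE (ParetoLT P ord) s) (hm : m = Fintype.card M) {t : Fin m}
    {h : List M} (hnd : h.Nodup) (hlen : h.length = t) {x : M} (hx : x ∉ h)
    (hle : ∀ j ≠ P t, PlateLE (ord j).le (groupPlate P (s.play h) j)
      (groupPlate P (s.play (h ++ [x])) j)) :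
    groupPlate P (s.play h) = groupPlate P (s.play (h ++ [x])) := by
  refine groupPlate_eq_of_forall_ne (s.play_bijective hm hnd (by lia))
    (s.play_bijective hm (nodup_append_singleton hnd hx) (by grind)) (i := P t) fun j hj => ?_
  by_contra hne
  exact hs t h hnd hlen x hx ⟨hle, j, hj, hle j hj, hne⟩

end Plays

section EquilibriumPlate

variable {M : Type*} [Fintype M] [DecidableEq M] {m k : ℕ} (P : Fin m → Fin k)
  (ord : Fin k → LinearOrder M) {t : Fin m} {h : List M} {x : M} {j : Fin k}

/-- The morsels shared by player `j` in the course of the history `h`. -/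
def pastPlate (h : List M) (j : Fin k) : Finset M :=
  {x | ∃ t : Fin m, P t ≠ j ∧ h[t.val]? = some x}

/-- The speakers of the turns from `t` on (counted from `0`), last turn first. -/
def remainingSpeakers (t : ℕ) : List (Fin k) :=
  ((List.ofFn P).drop t).reverse

/-- The group plate of player `j` when the history `h` is completed by reverse greedy play. -/
noncomputable def equilibriumPlate (h : List M) (j : Fin k) : Finset M :=
  pastPlate P h j ∪ reverseGreedy ord j (remainingSpeakers P h.length) h.toFinsetᶜ

theorem pastPlate_append_singleton (hlen : h.length = t) :
    pastPlate P (h ++ [x]) j = serve (P t) j x (pastPlate P h j) := by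
  ext y
  have hget (u : Fin m) : (h ++ [x])[u.val]? = some y ↔ h[u.val]? = some y ∨ u = t ∧ x = y := by
    grind
  unfold pastPlate serve
  split_ifs <;> simp only [hget, Finset.mem_filter_univ, Finset.mem_insert] <;> grind

theorem pastPlate_subset_toFinset : pastPlate P h j ⊆ h.toFinset := by
  intro x hx
  obtain ⟨t, -, ht⟩ := (Finset.mem_filter.1 hx).2
  exact List.mem_toFinset.2 (List.mem_of_getElem? ht)

theorem pastPlate_eq_groupPlate_play (s : Strategy M m) (hlen : h.length = m) :
    pastPlate P h j = groupPlate P (s.play h) j := by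
  have hget (t : Fin m) : h[t.val]? = some (s.play h t) := by
    simp [Strategy.play, Strategy.extend, hlen]
  ext x
  simp [pastPlate, groupPlate, hget]

theorem remainingSpeakers_eq_append (t : Fin m) :
    remainingSpeakers P t = remainingSpeakers P (t + 1) ++ [P t] := by
  unfold remainingSpeakers
  rw [List.drop_eq_getElem_cons (by simp), List.reverse_cons]
  simp

theorem length_remainingSpeakers_lt (hm : m = Fintype.card M) (hnd : h.Nodup)
    (hlen : h.length = t) : (remainingSpeakers P (t + 1)).length < h.toFinsetᶜ.card := by
  have hspeakers : (remainingSpeakers P (t + 1)).length = m - (t + 1) := by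
    simp [remainingSpeakers]
  rw [Finset.card_compl, List.toFinset_card_of_nodup hnd]
  lia

theorem equilibriumPlate_append_singleton (hlen : h.length = t) :
    equilibriumPlate P ord (h ++ [x]) j = pastPlate P h j ∪
      serve (P t) j x
        (reverseGreedy ord j (remainingSpeakers P (t + 1)) (h.toFinsetᶜ.erase x)) := by
  have hrem : (h ++ [x]).toFinsetᶜ = h.toFinsetᶜ.erase x := by
    ext y
    simp
  rw [equilibriumPlate, pastPlate_append_singleton P hlen, serve_union, hrem, List.length_append,
    List.length_singleton, hlen]

theorem exists_equilibriumPlate_append_singleton_eq (hm : m = Fintype.card M) (hnd : h.Nodup)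
    (hlen : h.length = t) :
    ∃ x ∉ h, equilibriumPlate P ord (h ++ [x]) = equilibriumPlate P ord h := by
  obtain ⟨x, hx, hx_eq⟩ :=
    exists_reverseGreedy_append_singleton ord (P t) (length_remainingSpeakers_lt P hm hnd hlen)
  refine ⟨x, by simpa using hx, funext fun j => ?_⟩
  rw [equilibriumPlate_append_singleton P ord hlen, equilibriumPlate, hlen,
    remainingSpeakers_eq_append, hx_eq j]

theorem plateLE_equilibriumPlate_append_singleton (hm : m = Fintype.card M) (hnd : h.Nodup)
    (hlen : h.length = t) (hx : x ∉ h) (hj : j ≠ P t) :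
    PlateLE (ord j).le (equilibriumPlate P ord (h ++ [x]) j) (equilibriumPlate P ord h j) := by
  have hxR : x ∈ h.toFinsetᶜ := by simpa using hx
  have hdisj {A : Finset M} (hA : A ⊆ h.toFinsetᶜ) : Disjoint (pastPlate P h j) A :=
    disjoint_compl_right.mono (pastPlate_subset_toFinset P) hA
  rw [equilibriumPlate_append_singleton P ord hlen, equilibriumPlate, hlen,
    remainingSpeakers_eq_append, reverseGreedy_append_singleton_of_ne ord hj.symm,
    serve_of_ne hj.symm]
  refine (PlateLE.refl _).union (plateLE_insert_reverseGreedy_erase ord hxR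
    (length_remainingSpeakers_lt P hm hnd hlen)) (hdisj (Finset.insert_subset hxR ?_))
    (hdisj (reverseGreedy_subset ord))
  exact (reverseGreedy_subset ord).trans (Finset.erase_subset x _)

variable {P ord}

theorem SPE.groupPlate_play_eq_equilibriumPlate {s : Strategy M m} (hs : SPE (ParetoLT P ord) s)
    (hm : m = Fintype.card M) (hnd : h.Nodup) (hlen : h.length ≤ m) :
    groupPlate P (s.play h) = equilibriumPlate P ord h := by
  induction hr : m - h.length generalizing h with
  | zero =>
    have hlen_eq : h.length = m := by lia
    have hrem : h.toFinsetᶜ = ∅ := by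
      rw [← Finset.card_eq_zero, Finset.card_compl, List.toFinset_card_of_nodup hnd, ← hm, hr]
    funext j
    rw [equilibriumPlate, hrem, reverseGreedy_empty, Finset.union_empty,
      pastPlate_eq_groupPlate_play P s hlen_eq]
  | succ r ih =>
    obtain ⟨t, ht⟩ : ∃ t : Fin m, h.length = t := ⟨⟨h.length, by lia⟩, rfl⟩
    have ih_append {y : M} (hy : y ∉ h) :
        groupPlate P (s.play (h ++ [y])) = equilibriumPlate P ord (h ++ [y]) :=
      ih (nodup_append_singleton hnd hy) (by grind) (by grind)
    have hchoice : s.choice h ∉ h := s.valid h hnd (by lia)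
    obtain ⟨x, hx, hx_eq⟩ := exists_equilibriumPlate_append_singleton_eq P ord hm hnd ht
    have hle : ∀ j ≠ P t, PlateLE (ord j).le (groupPlate P (s.play h) j)
        (groupPlate P (s.play (h ++ [x])) j) := fun j hj => by
      rw [← s.play_append_choice (by lia), ih_append hchoice, ih_append hx, hx_eq]
      exact plateLE_equilibriumPlate_append_singleton P ord hm hnd ht hchoice hj
    rw [hs.groupPlate_eq_of_forall_plateLE hm hnd ht hx hle, ih_append hx, hx_eq]

end EquilibriumPlate

/-- in the group decision dinner every SPE is conflict-free: no
group can change its decision at a node so that any one of its members receives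
a strictly more enjoyable plate. -/
theorem group_spe_conflict_free {M : Type*} [Fintype M] [DecidableEq M] {m k : ℕ}
    (hm : m = Fintype.card M) (P : Fin m → Fin k) (ord : Fin k → LinearOrder M)
    (s : Strategy M m) (hs : SPE (fun t => ParetoLT P ord t) s) :
    ∀ t : Fin m, ∀ h : List M, h.Nodup → h.length = t.val →
      ∀ x : M, x ∉ h → ∀ j : Fin k, j ≠ P t →
        ¬ PlateLT (ord j).le (groupPlate P (s.play h) j)
            (groupPlate P (s.play (h ++ [x])) j) := by
  intro t h hnd hlen x hx j hj ⟨hle, hne⟩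
  have hplay : groupPlate P (s.play h) = equilibriumPlate P ord h :=
    hs.groupPlate_play_eq_equilibriumPlate hm hnd (by lia)
  have hplay_x : groupPlate P (s.play (h ++ [x])) = equilibriumPlate P ord (h ++ [x]) :=
    hs.groupPlate_play_eq_equilibriumPlate hm (nodup_append_singleton hnd hx) (by grind)
  have hge : PlateLE (ord j).le (groupPlate P (s.play (h ++ [x])) j)
      (groupPlate P (s.play h) j) := by
    rw [hplay, hplay_x]
    exact plateLE_equilibriumPlate_append_singleton P ord hm hnd hlen hx hj
  exact hne (@PlateLE.antisymm M (ord j).toPartialOrder _ _ hle hge)
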